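/- Let k be a nonnegative integer and let f = f₀ + M₂* f₁ with f₀ ∈ M_{4k}(Γ₀⁺(2),(−1)^k) and f₁ ∈ M_{4k-2}(Γ₀⁺(2),(−1)^k), where M₂*(z) = (2E₂(2z)+E₂(z))/3. Suppose f is extremal, i.e. v_∞(f) = k (which equals dim 𝑀̃_{4k}^{≤1}(Γ₀⁺(2),(−1)^k) − 1). Let P(z) = e^{πikz} ∏_{n≥1} (1−qⁿ)^{4k} (1−q^{2n})^{4k} (so that P = M₈^{k/2}, where M₈(z) = η(z)⁸η(2z)⁸; P is nonvanishing on ℍ). Then y := f/P satisfies the differential equation y″(z) = −4π² (k/2)² M₄(z) y(z) for all z ∈ ℍ, where M₄(z) = (4E₄(2z) + E₄(z))/5. -/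

import Mathlib

noncomputable section

open Complex Matrix Filter Topology

abbrev SL2R := Matrix.SpecialLinearGroup (Fin 2) ℝ
abbrev SL2Z := Matrix.SpecialLinearGroup (Fin 2) ℤ

/-- The upper half-plane, as a subset of `ℂ`. -/
def UHP : Set ℂ := {z : ℂ | 0 < z.im}

/-- The embedding of `SL(2,ℤ)` into `SL(2,ℝ)`. -/
def toR : SL2Z →* SL2R := Matrix.SpecialLinearGroup.map (Int.castRingHom ℝ)

/-- `SL(2,ℤ)` as a subgroup of `SL(2,ℝ)`. -/
def SL2ZR : Subgroup SL2R := Subgroup.map toR ⊤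

/-- Möbius action of a real matrix on a complex number. -/
def moeb (γ : SL2R) (z : ℂ) : ℂ :=
  ((γ.1 0 0 : ℂ) * z + (γ.1 0 1 : ℂ)) / ((γ.1 1 0 : ℂ) * z + (γ.1 1 1 : ℂ))

/-- The automorphy factor `cz + d`. -/
def jfac (γ : SL2R) (z : ℂ) : ℂ := (γ.1 1 0 : ℂ) * z + (γ.1 1 1 : ℂ)

/-- A holomorphic modular form of weight `k` and character `χ` on `Γ ≤ SL(2,ℝ)`
(for `Γ` commensurable with `SL(2,ℤ)`): holomorphic on `ℍ`, satisfying the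
transformation law, and holomorphic (bounded) at every cusp. -/
structure IsModularForm (Γ : Subgroup SL2R) (χ : SL2R → ℂ) (k : ℤ) (f : ℂ → ℂ) : Prop where
  holo : DifferentiableOn ℂ f UHP
  transform : ∀ γ ∈ Γ, ∀ z ∈ UHP, f (moeb γ z) = χ γ * jfac γ z ^ k * f z
  bdd_at_cusps : ∀ σ : SL2Z, ∃ C : ℝ, ∀ z ∈ UHP, 1 ≤ z.im →
    ‖jfac (toR σ) z ^ (-k) * f (moeb (toR σ) z)‖ ≤ C

/-- A finite-order character of `Γ`. -/
def IsCharacter (Γ : Subgroup SL2R) (χ : SL2R → ℂ) : Prop :=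
  (∀ γ ∈ Γ, ∀ δ ∈ Γ, χ (γ * δ) = χ γ * χ δ) ∧
    ∃ n : ℕ, 0 < n ∧ ∀ γ ∈ Γ, χ γ ^ n = 1

/-- `φ` is quasimodular of weight 2 and depth 1 on `Γ`, with constant `α`:
`(cz+d)⁻² φ(γz) = φ(z) + α c/(cz+d)`. -/
def IsQuasiWt2 (Γ : Subgroup SL2R) (α : ℂ) (φ : ℂ → ℂ) : Prop :=
  ∀ γ ∈ Γ, ∀ z ∈ UHP,
    (jfac γ z)⁻¹ ^ 2 * φ (moeb γ z) = φ z + α * (γ.1 1 0 : ℂ) / jfac γ z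

/-- `f` has vanishing order `ν` at the cusp `∞`, with respect to `q_N = e^{2πiz/N}`:
`q_N^{-ν}·f(z)` tends to a nonzero constant as `Im z → ∞`. -/
def VOrder (N : ℝ) (f : ℂ → ℂ) (ν : ℝ) : Prop :=
  ∃ c : ℂ, c ≠ 0 ∧ ∀ ε : ℝ, 0 < ε → ∃ Y : ℝ, ∀ z : ℂ, Y ≤ z.im →
    ‖Complex.exp (-(2 * Real.pi * Complex.I * (ν : ℂ) * z / (N : ℂ))) * f z - c‖ < ε


/-- `Γ₀(N)` as a subgroup of `SL(2,ℝ)`. -/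
def Gamma0R (N : ℕ) : Subgroup SL2R := Subgroup.map toR (CongruenceSubgroup.Gamma0 N)

/-- `q = e^{2πiz}`. -/
def qexp (z : ℂ) : ℂ := Complex.exp (2 * Real.pi * Complex.I * z)

/-- `E₂(z) = 1 - 24 ∑_{n≥1} σ₁(n) qⁿ`. -/
def E2 (z : ℂ) : ℂ :=
  1 - 24 * ∑' n : ℕ, (ArithmeticFunction.sigma 1 (n + 1) : ℂ) * qexp z ^ (n + 1)

/-- `E₄(z) = 1 + 240 ∑_{n≥1} σ₃(n) qⁿ`. -/
def E4 (z : ℂ) : ℂ :=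
  1 + 240 * ∑' n : ℕ, (ArithmeticFunction.sigma 3 (n + 1) : ℂ) * qexp z ^ (n + 1)

/-- `M_k(Γ₀⁺(2),ε)`. -/
def MFplus2 (ε : ℂ) (k : ℤ) : Set (ℂ → ℂ) :=
  {f | IsModularForm (Gamma0R 2) (fun _ => 1) k f ∧
    ∀ z ∈ UHP, ((Real.sqrt 2 : ℂ) * z) ^ (-k) * f (-1 / (2 * z)) = ε * f z}

/-- `M₂*(z) = (2E₂(2z) + E₂(z))/3`. -/
def M2star2 (z : ℂ) : ℂ := (2 * E2 (2 * z) + E2 z) / 3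

/-- `M₄(z) = (4E₄(2z) + E₄(z))/5`. -/
def M4plus2 (z : ℂ) : ℂ := (4 * E4 (2 * z) + E4 z) / 5

/-- `P(z) = e^{πikz} ∏_{n≥1} (1-qⁿ)^{4k}(1-q^{2n})^{4k}` (equal to `M₈(z)^{k/2}` where
`M₈ = η(z)⁸η(2z)⁸`; nonvanishing on `ℍ`). -/
def Pfun2 (k : ℕ) (z : ℂ) : ℂ :=
  Complex.exp (Real.pi * Complex.I * k * z) *
    ∏' n : ℕ, ((1 - qexp z ^ (n + 1)) ^ (4 * k) * (1 - qexp z ^ (2 * (n + 1))) ^ (4 * k))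

/-!
Put `y = f / P`, `g = f₁ / P` and `β = 4 / (πi)`. The quasimodularity of `M₂*` makes
`(y, z y + β g)` a vector-valued form of weight `-1` for the group generated by `T : z ↦ z + 1` and
the Fricke involution. Its Wronskian is invariant, and extremality makes it bounded at `i∞`, so it
is a constant; this constant is nonzero, because the quotient of the two components increases by
`1` under `T`. Hence `y″ = Q y` with `Q` holomorphic on `ℍ`, and `Q` has weight `4` because two
derivatives raise weight `-1` to weight `3`. Extremality gives `y ~ c e^{πikz}` at `i∞`, so
`Q → (πik)²` there. Finally `Q - (πik)² M₄` has weight `4` and vanishes at `i∞`, so its square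
divided by the nonvanishing `M₈` is an invariant function vanishing at `i∞`, which must be zero.
-/

/-- The filter of neighbourhoods of the cusp `i∞`, on `ℂ` rather than on the subtype `ℍ`. -/
abbrev atImInfty : Filter ℂ := comap Complex.im atTop

instance neBot_atImInfty : NeBot atImInfty :=
  comap_neBot_iff_frequently.2 (Eventually.of_forall fun y => ⟨⟨0, y⟩, rfl⟩).frequently

lemma isOpen_UHP : IsOpen UHP := isOpen_lt continuous_const Complex.continuous_im

lemma eventually_le_im (Y : ℝ) : ∀ᶠ z in atImInfty, Y ≤ z.im :=
  tendsto_comap.eventually (eventually_ge_atTop Y)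

lemma eventually_mem_UHP : ∀ᶠ z in atImInfty, z ∈ UHP :=
  tendsto_comap.eventually (eventually_gt_atTop 0)

lemma eventually_atImInfty_iff {p : ℂ → Prop} :
    (∀ᶠ z in atImInfty, p z) ↔ ∃ Y : ℝ, ∀ z : ℂ, Y ≤ z.im → p z := by
  simp only [eventually_comap, eventually_atTop]
  exact ⟨fun ⟨Y, h⟩ => ⟨Y, fun z hz => h z.im hz z rfl⟩,
    fun ⟨Y, h⟩ => ⟨Y, fun y hy z hz => h z (hz ▸ hy)⟩⟩

lemma ne_zero_of_mem_UHP {z : ℂ} (hz : z ∈ UHP) : z ≠ 0 := by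
  rintro rfl
  simp [UHP] at hz

lemma add_real_mem_UHP {z : ℂ} (hz : z ∈ UHP) (x : ℝ) : z + x ∈ UHP := by
  simpa [UHP] using hz

lemma real_mul_mem_UHP {z : ℂ} (hz : z ∈ UHP) {a : ℝ} (ha : 0 < a) : a * z ∈ UHP := by
  simpa [UHP, ha] using hz

lemma differentiableAt_of_mem_UHP {g : ℂ → ℂ} (hg : DifferentiableOn ℂ g UHP) {z : ℂ}
    (hz : z ∈ UHP) : DifferentiableAt ℂ g z :=
  hg.differentiableAt (isOpen_UHP.mem_nhds hz)

lemma differentiableOn_deriv_UHP {g : ℂ → ℂ} (hg : DifferentiableOn ℂ g UHP) :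
    DifferentiableOn ℂ (deriv g) UHP :=
  hg.deriv isOpen_UHP

/-- The Fricke involution `z ↦ -1 / (N z)` of the upper half-plane. -/
def fricke (N : ℝ) (z : ℂ) : ℂ := -1 / (N * z)

lemma fricke_im (N : ℝ) (z : ℂ) : (fricke N z).im = z.im / (N * normSq z) := by
  have hinv : (-1 / z).im = z.im / normSq z := by simp [neg_div, one_div, inv_im]
  rw [fricke, mul_comm, ← div_div, div_ofReal_im, hinv, div_div, mul_comm N]

lemma fricke_mem_UHP {N : ℝ} (hN : 0 < N) {z : ℂ} (hz : z ∈ UHP) : fricke N z ∈ UHP := by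
  have hnorm : 0 < normSq z := normSq_pos.2 (ne_zero_of_mem_UHP hz)
  have him : 0 < (fricke N z).im := fricke_im N z ▸ div_pos hz (mul_pos hN hnorm)
  exact him

lemma hasDerivAt_fricke (N : ℝ) {z : ℂ} (hz : z ≠ 0) :
    HasDerivAt (fricke N) (1 / (N * z ^ 2)) z := by
  have hinv : HasDerivAt (fun w : ℂ => -1 / N * w⁻¹) (-1 / N * -(z ^ 2)⁻¹) z :=
    (hasDerivAt_inv hz).const_mul _
  refine (hinv.congr_deriv (by ring)).congr_of_eventuallyEq (Eventually.of_forall fun w => ?_)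
  simp only [fricke]
  ring

/-- A holomorphic function on `ℍ` transforming with weight `2w` under the group generated by
`z ↦ z + 1` and the Fricke involution, with trivial multiplier; no growth condition at `i∞`. -/
structure IsFrickeForm (N : ℝ) (w : ℤ) (f : ℂ → ℂ) : Prop where
  differentiableOn : DifferentiableOn ℂ f UHP
  map_add_one : ∀ z ∈ UHP, f (z + 1) = f z
  map_fricke : ∀ z ∈ UHP, f (fricke N z) = (N * z ^ 2) ^ w * f z

namespace IsFrickeForm

variable {N : ℝ} {w : ℤ} {f g : ℂ → ℂ}

lemma const_mul (hf : IsFrickeForm N w f) (a : ℂ) : IsFrickeForm N w fun z => a * f z where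
  differentiableOn := hf.differentiableOn.const_mul a
  map_add_one z hz := by rw [hf.map_add_one z hz]
  map_fricke z hz := by rw [hf.map_fricke z hz, mul_left_comm]

lemma sub (hf : IsFrickeForm N w f) (hg : IsFrickeForm N w g) :
    IsFrickeForm N w fun z => f z - g z where
  differentiableOn := hf.differentiableOn.sub hg.differentiableOn
  map_add_one z hz := by rw [hf.map_add_one z hz, hg.map_add_one z hz]
  map_fricke z hz := by rw [hf.map_fricke z hz, hg.map_fricke z hz, mul_sub]

lemma sq_div (hN : 0 < N) (hf : IsFrickeForm N w f) (hg : IsFrickeForm N (w + w) g)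
    (hg₀ : ∀ z ∈ UHP, g z ≠ 0) : IsFrickeForm N 0 fun z => f z ^ 2 / g z where
  differentiableOn := (hf.differentiableOn.pow 2).div hg.differentiableOn hg₀
  map_add_one z hz := by rw [hf.map_add_one z hz, hg.map_add_one z hz]
  map_fricke z hz := by
    have hNz : (N : ℂ) * z ^ 2 ≠ 0 :=
      mul_ne_zero (ofReal_ne_zero.2 hN.ne') (pow_ne_zero 2 (ne_zero_of_mem_UHP hz))
    rw [hf.map_fricke z hz, hg.map_fricke z hz, mul_pow, sq (_ ^ w), ← zpow_add₀ hNz,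
      mul_div_mul_left _ _ (zpow_ne_zero _ hNz), zpow_zero, one_mul]

end IsFrickeForm

section Periodic

variable {g : ℂ → ℂ}

lemma indicator_UHP_eventuallyEq (g : ℂ → ℂ) : UHP.indicator g =ᶠ[atImInfty] g :=
  eventually_mem_UHP.mono fun _ hz => Set.indicator_of_mem hz g

lemma periodic_indicator_UHP (hT : ∀ z ∈ UHP, g (z + 1) = g z) :
    Function.Periodic (UHP.indicator g) ((1 : ℝ) : ℂ) := by
  intro z
  by_cases hz : z ∈ UHP
  · rw [Set.indicator_of_mem (add_real_mem_UHP hz 1), Set.indicator_of_mem hz, ofReal_one, hT z hz]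
  · have hz' : z + (1 : ℝ) ∉ UHP := by simpa [UHP] using hz
    rw [Set.indicator_of_notMem hz', Set.indicator_of_notMem hz]

lemma map_add_int (hT : ∀ z ∈ UHP, g (z + 1) = g z) {z : ℂ} (hz : z ∈ UHP) (m : ℤ) :
    g (z + m) = g z := by
  have hm : z + m ∈ UHP := by simpa using add_real_mem_UHP hz m
  have hper := (periodic_indicator_UHP hT).int_mul m z
  rwa [ofReal_one, mul_one, Set.indicator_of_mem hm, Set.indicator_of_mem hz] at hper

lemma differentiableAt_indicator_UHP (hd : DifferentiableOn ℂ g UHP) {z : ℂ} (hz : z ∈ UHP) :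
    DifferentiableAt ℂ (UHP.indicator g) z :=
  (differentiableAt_of_mem_UHP hd hz).congr_of_eventuallyEq <|
    (isOpen_UHP.eventually_mem hz).mono fun _ hw => Set.indicator_of_mem hw g

lemma eventually_differentiableAt_indicator_UHP (hd : DifferentiableOn ℂ g UHP) :
    ∀ᶠ z in atImInfty, DifferentiableAt ℂ (UHP.indicator g) z :=
  eventually_mem_UHP.mono fun _ hz => differentiableAt_indicator_UHP hd hz

lemma boundedAtFilter_indicator_UHP (hb : BoundedAtFilter atImInfty g) :
    BoundedAtFilter atImInfty (UHP.indicator g) :=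
  hb.congr' (indicator_UHP_eventuallyEq g).symm EventuallyEq.rfl

open Function.Periodic

lemma qexp_eq_qParam (z : ℂ) : qexp z = qParam 1 z := by
  simp [qexp, qParam]

lemma norm_qexp (z : ℂ) : ‖qexp z‖ = Real.exp (-(2 * Real.pi * z.im)) := by
  simp [qexp, norm_exp]

lemma norm_qexp_lt_one {z : ℂ} (hz : z ∈ UHP) : ‖qexp z‖ < 1 :=
  qexp_eq_qParam z ▸ norm_qParam_lt_one one_pos hz

lemma norm_qexp_le_of_im_le {z w : ℂ} (h : w.im ≤ z.im) : ‖qexp z‖ ≤ ‖qexp w‖ := by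
  rw [norm_qexp, norm_qexp]
  gcongr

lemma tendsto_qexp : Tendsto qexp atImInfty (𝓝 0) :=
  ((qParam_tendsto one_pos).mono_right nhdsWithin_le_nhds).congr fun z => (qexp_eq_qParam z).symm

lemma qexp_add_one (z : ℂ) : qexp (z + 1) = qexp z := by
  rw [qexp, mul_add, exp_add, mul_one, exp_two_pi_mul_I, mul_one, qexp]

lemma qexp_two_mul (z : ℂ) : qexp (2 * z) = qexp z ^ 2 := by
  rw [qexp, qexp, ← exp_nat_mul]
  congr 1
  push_cast
  ring

lemma exists_tendsto_of_bounded (hd : DifferentiableOn ℂ g UHP)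
    (hT : ∀ z ∈ UHP, g (z + 1) = g z) (hb : BoundedAtFilter atImInfty g) :
    ∃ c, Tendsto g atImInfty (𝓝 c) :=
  ⟨_, (tendsto_at_I_inf one_pos (periodic_indicator_UHP hT)
    (eventually_differentiableAt_indicator_UHP hd) (boundedAtFilter_indicator_UHP hb)).congr'
      (indicator_UHP_eventuallyEq g)⟩

lemma isBigO_qexp_of_tendsto_zero (hd : DifferentiableOn ℂ g UHP)
    (hT : ∀ z ∈ UHP, g (z + 1) = g z) (h₀ : Tendsto g atImInfty (𝓝 0)) :
    g =O[atImInfty] qexp := by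
  have hdecay := exp_decay_of_zero_at_inf one_pos (periodic_indicator_UHP hT)
    (eventually_differentiableAt_indicator_UHP hd) (h₀.congr' (indicator_UHP_eventuallyEq g).symm)
  refine (hdecay.congr' (indicator_UHP_eventuallyEq g) EventuallyEq.rfl).trans
    (Asymptotics.IsBigO.of_norm_left ?_)
  exact (Asymptotics.isBigO_refl qexp _).norm_left.congr_left fun z => by
    rw [qexp_eq_qParam, norm_qParam, Real.norm_of_nonneg (Real.exp_nonneg _)]

lemma invQParam_mem_UHP {q : ℂ} (hq : q ∈ Metric.ball (0 : ℂ) 1) (hq₀ : q ≠ 0) :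
    invQParam 1 q ∈ UHP :=
  im_invQParam_pos_of_norm_lt_one one_pos (mem_ball_zero_iff.1 hq) hq₀

lemma differentiableOn_cuspFunction_indicator_UHP (hd : DifferentiableOn ℂ g UHP)
    (hT : ∀ z ∈ UHP, g (z + 1) = g z) (hb : BoundedAtFilter atImInfty g) :
    DifferentiableOn ℂ (cuspFunction 1 (UHP.indicator g)) (Metric.ball 0 1) := by
  have hper := periodic_indicator_UHP hT
  intro q hq
  refine DifferentiableAt.differentiableWithinAt ?_
  rcases eq_or_ne q 0 with rfl | hq₀
  · exact differentiableAt_cuspFunction_zero one_pos hper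
      (eventually_differentiableAt_indicator_UHP hd) (boundedAtFilter_indicator_UHP hb)
  · have := differentiableAt_cuspFunction one_ne_zero hper
      (differentiableAt_indicator_UHP hd (invQParam_mem_UHP hq hq₀))
    rwa [qParam_right_inv one_ne_zero hq₀] at this

lemma eq_const_of_exists_le_im (hd : DifferentiableOn ℂ g UHP)
    (hT : ∀ z ∈ UHP, g (z + 1) = g z) (hb : BoundedAtFilter atImInfty g) {c : ℝ} (hc : 0 < c)
    (hred : ∀ z ∈ UHP, ∃ w ∈ UHP, c ≤ w.im ∧ ‖g z‖ ≤ ‖g w‖) :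
    ∃ a, ∀ z ∈ UHP, g z = a := by
  set G := cuspFunction 1 (UHP.indicator g)
  have hG : ∀ z ∈ UHP, G (qexp z) = g z := fun z hz => by
    rw [qexp_eq_qParam]
    exact (eq_cuspFunction one_ne_zero (periodic_indicator_UHP hT) z).trans
      (Set.indicator_of_mem hz g)
  have hball : ∀ z ∈ UHP, qexp z ∈ Metric.ball (0 : ℂ) 1 := fun z hz =>
    mem_ball_zero_iff.2 (norm_qexp_lt_one hz)
  have hmax : ∀ q ∈ Metric.ball (0 : ℂ) 1,
      ∃ p ∈ Metric.closedBall (0 : ℂ) ‖qexp (c * I)‖, ‖G q‖ ≤ ‖G p‖ := by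
    intro q hq
    rcases eq_or_ne q 0 with rfl | hq₀
    · exact ⟨0, Metric.mem_closedBall_self (norm_nonneg _), le_rfl⟩
    obtain ⟨w, hw, hcw, hle⟩ := hred _ (invQParam_mem_UHP hq hq₀)
    refine ⟨qexp w, mem_closedBall_zero_iff.2 (norm_qexp_le_of_im_le (by simpa using hcw)), ?_⟩
    rwa [hG w hw, ← qParam_right_inv one_ne_zero hq₀, ← qexp_eq_qParam,
      hG _ (invQParam_mem_UHP hq hq₀)]
  have hconst := eq_const_of_exists_le
    (differentiableOn_cuspFunction_indicator_UHP hd hT hb) (norm_nonneg (qexp (c * I)))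
    (norm_qexp_lt_one (by simpa [UHP] using hc)) hmax
  exact ⟨G 0, fun z hz => (hG z hz).symm.trans (hconst (hball z hz))⟩

end Periodic

section Reduction

variable {N : ℝ} {f : ℂ → ℂ}

lemma im_le_mul_im_fricke (hN : 0 < N) {c : ℝ} {z : ℂ} (hz : z ∈ UHP) (hre : |z.re| ≤ 1 / 2)
    (him : z.im ≤ c) : z.im ≤ N * (1 / 4 + c ^ 2) * (fricke N z).im := by
  have hpos : 0 < z.im := hz
  have hnorm : 0 < normSq z := normSq_pos.2 (ne_zero_of_mem_UHP hz)
  have hle : normSq z ≤ 1 / 4 + c ^ 2 := by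
    rw [normSq_apply]
    nlinarith [abs_le.1 hre]
  rw [fricke_im, mul_div_assoc', le_div_iff₀ (by positivity)]
  calc z.im * (N * normSq z) ≤ z.im * (N * (1 / 4 + c ^ 2)) := by gcongr
    _ = N * (1 / 4 + c ^ 2) * z.im := mul_comm _ _

lemma IsFrickeForm.exists_le_im_of_mul_pow_le (hN : 0 < N) (hf : IsFrickeForm N 0 f) {c : ℝ}
    (n : ℕ) {z : ℂ} (hz : z ∈ UHP) (hzn : c * (N * (1 / 4 + c ^ 2)) ^ n ≤ z.im) :
    ∃ w ∈ UHP, c ≤ w.im ∧ f w = f z := by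
  induction n generalizing z with
  | zero => exact ⟨z, hz, by simpa using hzn, rfl⟩
  | succ n ih =>
    rcases le_or_gt c z.im with hcz | hzc
    · exact ⟨z, hz, hcz, rfl⟩
    set u : ℂ := z + (-round z.re : ℤ) with hu
    have huim : u.im = z.im := by simp [hu]
    have hure : |u.re| ≤ 1 / 2 := by simpa [hu, sub_eq_add_neg] using abs_sub_round z.re
    have huU : u ∈ UHP := by simpa [UHP, huim] using hz
    have hstep := im_le_mul_im_fricke hN huU hure (huim.trans_le hzc.le)
    have hpow : c * (N * (1 / 4 + c ^ 2)) ^ n ≤ (fricke N u).im := by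
      refine le_of_mul_le_mul_left ?_ (show 0 < N * (1 / 4 + c ^ 2) by positivity)
      calc N * (1 / 4 + c ^ 2) * (c * (N * (1 / 4 + c ^ 2)) ^ n)
          = c * (N * (1 / 4 + c ^ 2)) ^ (n + 1) := by ring
        _ ≤ u.im := huim ▸ hzn
        _ ≤ _ := hstep
    obtain ⟨w, hw, hcw, hfw⟩ := ih (fricke_mem_UHP hN huU) hpow
    refine ⟨w, hw, hcw, ?_⟩
    rw [hfw, hf.map_fricke u huU, zpow_zero, one_mul, hu, map_add_int hf.map_add_one hz]

lemma IsFrickeForm.exists_le_im (hN : 0 < N) (hf : IsFrickeForm N 0 f) {c : ℝ} (hc : 0 < c)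
    (hNc : N * (1 / 4 + c ^ 2) < 1) {z : ℂ} (hz : z ∈ UHP) :
    ∃ w ∈ UHP, c ≤ w.im ∧ f w = f z := by
  obtain ⟨n, hn⟩ := exists_pow_lt_of_lt_one (div_pos hz hc) hNc
  exact hf.exists_le_im_of_mul_pow_le hN n hz ((lt_div_iff₀' hc).1 hn).le

theorem IsFrickeForm.eq_const_of_bounded (hN : 0 < N) (hN₄ : N < 4) (hf : IsFrickeForm N 0 f)
    (hb : BoundedAtFilter atImInfty f) : ∃ a, ∀ z ∈ UHP, f z = a := by
  have hpos : 0 < (4 - N) / (8 * N) := div_pos (sub_pos.2 hN₄) (by positivity)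
  have hNc : N * (1 / 4 + √((4 - N) / (8 * N)) ^ 2) < 1 := by
    rw [Real.sq_sqrt hpos.le]
    field_simp
    linarith
  refine eq_const_of_exists_le_im hf.differentiableOn hf.map_add_one hb (Real.sqrt_pos.2 hpos)
    fun z hz => ?_
  obtain ⟨w, hw, hcw, hfw⟩ := hf.exists_le_im hN (Real.sqrt_pos.2 hpos) hNc hz
  exact ⟨w, hw, hcw, hfw ▸ le_rfl⟩

theorem IsFrickeForm.eq_zero_of_tendsto_zero (hN : 0 < N) (hN₄ : N < 4)
    (hf : IsFrickeForm N 0 f) (h₀ : Tendsto f atImInfty (𝓝 0)) {z : ℂ} (hz : z ∈ UHP) :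
    f z = 0 := by
  obtain ⟨a, ha⟩ := hf.eq_const_of_bounded hN hN₄ (h₀.isBigO_one ℝ)
  have hlim : Tendsto f atImInfty (𝓝 a) :=
    tendsto_const_nhds.congr' (eventually_mem_UHP.mono fun w hw => (ha w hw).symm)
  rw [ha z hz, tendsto_nhds_unique hlim h₀]

-- Comparing `f ^ 2` with a nonvanishing form of twice the weight that is no smaller than `q` at
-- `i∞` replaces the valence formula.
theorem IsFrickeForm.eq_zero_of_isBigO {D : ℂ → ℂ} {w : ℤ} (hN : 0 < N) (hN₄ : N < 4)
    (hf : IsFrickeForm N w f) (h₀ : Tendsto f atImInfty (𝓝 0)) (hD : IsFrickeForm N (w + w) D)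
    (hD₀ : ∀ z ∈ UHP, D z ≠ 0) (hqD : qexp =O[atImInfty] D) {z : ℂ} (hz : z ∈ UHP) :
    f z = 0 := by
  have hfD : f =O[atImInfty] D :=
    (isBigO_qexp_of_tendsto_zero hf.differentiableOn hf.map_add_one h₀).trans hqD
  have hlim : Tendsto (fun z => f z ^ 2 / D z) atImInfty (𝓝 0) :=
    (h₀.zero_mul_isBoundedUnder_le (Asymptotics.div_isBoundedUnder_of_isBigO hfD)).congr
      fun z => by ring
  have hsq := (hf.sq_div hN hD hD₀).eq_zero_of_tendsto_zero hN hN₄ hlim hz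
  exact pow_eq_zero_iff two_ne_zero |>.1 ((div_eq_zero_iff.1 hsq).resolve_right (hD₀ z hz))

end Reduction

section Derivatives

variable {N : ℝ} {y F : ℂ → ℂ} {c s : ℂ}

lemma deriv_eq_of_eqOn_UHP {F₁ F₂ : ℂ → ℂ} (h : ∀ z ∈ UHP, F₁ z = F₂ z) {z : ℂ} (hz : z ∈ UHP) :
    deriv F₁ z = deriv F₂ z :=
  EventuallyEq.deriv_eq ((isOpen_UHP.eventually_mem hz).mono h)

lemma deriv_map_add_one (hT : ∀ z ∈ UHP, y (z + 1) = F z) {z : ℂ} (hz : z ∈ UHP) :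
    deriv y (z + 1) = deriv F z := by
  rw [← deriv_comp_add_const]
  exact deriv_eq_of_eqOn_UHP hT hz

lemma deriv_map_add_one_of_const_mul {e : ℂ} (hT : ∀ z ∈ UHP, y (z + 1) = e * y z) {z : ℂ}
    (hz : z ∈ UHP) : deriv y (z + 1) = e * deriv y z := by
  rw [deriv_map_add_one hT hz, deriv_const_mul_field]

lemma deriv_map_fricke (hN : 0 < N) (hy : DifferentiableOn ℂ y UHP)
    (hW : ∀ z ∈ UHP, y (fricke N z) = F z) {z : ℂ} (hz : z ∈ UHP) :
    deriv y (fricke N z) = N * z ^ 2 * deriv F z := by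
  have hcomp := (differentiableAt_of_mem_UHP hy (fricke_mem_UHP hN hz)).hasDerivAt.comp z
    (hasDerivAt_fricke N (ne_zero_of_mem_UHP hz))
  have hF : deriv F z = deriv y (fricke N z) * (1 / (N * z ^ 2)) := by
    rw [← hcomp.deriv]
    exact (deriv_eq_of_eqOn_UHP hW hz).symm
  have hN₀ : (N : ℂ) ≠ 0 := ofReal_ne_zero.2 hN.ne'
  have hz₀ := ne_zero_of_mem_UHP hz
  rw [hF]
  field_simp

lemma deriv_map_fricke_of_weight_neg_one (hN : 0 < N) (hy : DifferentiableOn ℂ y UHP)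
    (hF : DifferentiableOn ℂ F UHP) (hW : ∀ z ∈ UHP, y (fricke N z) = F z / z)
    {z : ℂ} (hz : z ∈ UHP) : deriv y (fricke N z) = N * (z * deriv F z - F z) := by
  have hz₀ := ne_zero_of_mem_UHP hz
  have hquot := (differentiableAt_of_mem_UHP hF hz).hasDerivAt.div (hasDerivAt_id z) hz₀
  rw [deriv_map_fricke hN hy hW hz, show deriv (fun z => F z / z) z = _ from hquot.deriv]
  simp only [id_eq]
  field_simp

-- Bol identity: the second derivative raises the weight from `-1` to `3`.
lemma deriv_deriv_map_fricke_of_weight_neg_one (hN : 0 < N) (hy : DifferentiableOn ℂ y UHP)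
    (hF : DifferentiableOn ℂ F UHP) (hW : ∀ z ∈ UHP, y (fricke N z) = F z / z)
    {z : ℂ} (hz : z ∈ UHP) :
    deriv (deriv y) (fricke N z) = N ^ 2 * z ^ 3 * deriv (deriv F) z := by
  have hF₁ := (differentiableAt_of_mem_UHP hF hz).hasDerivAt
  have hF₂ := (differentiableAt_of_mem_UHP (differentiableOn_deriv_UHP hF) hz).hasDerivAt
  have hder := (((hasDerivAt_id z).mul hF₂).sub hF₁).const_mul (N : ℂ)
  rw [deriv_map_fricke hN (differentiableOn_deriv_UHP hy)
    (fun w hw => deriv_map_fricke_of_weight_neg_one hN hy hF hW hw) hz,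
    show deriv (fun z => N * (z * deriv F z - F z)) z = _ from hder.deriv]
  simp only [id_eq]
  ring

lemma tendsto_deriv_zero (hy : DifferentiableOn ℂ y UHP) (hlim : Tendsto y atImInfty (𝓝 c)) :
    Tendsto (deriv y) atImInfty (𝓝 0) := by
  rw [Metric.tendsto_nhds] at hlim ⊢
  intro ε hε
  obtain ⟨Y, hY⟩ := eventually_atImInfty_iff.1
    ((hlim (ε / 2) (half_pos hε)).and eventually_mem_UHP)
  filter_upwards [eventually_le_im (Y + 1)] with z hz
  have hball : ∀ w ∈ Metric.closedBall z 1, Y ≤ w.im := fun w hw => by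
    have him : |(w - z).im| ≤ 1 := (abs_im_le_norm _).trans (mem_closedBall_iff_norm.1 hw)
    rw [sub_im, abs_le] at him
    linarith
  have hdiff : DiffContOnCl ℂ (fun w => y w - c) (Metric.ball z 1) := by
    refine DifferentiableOn.diffContOnCl ?_
    rw [closure_ball z one_ne_zero]
    exact (hy.sub_const c).mono fun w hw => (hY w (hball w hw)).2
  have hcauchy := norm_deriv_le_of_forall_mem_sphere_norm_le one_pos hdiff (C := ε / 2)
    fun w hw => (dist_eq_norm (y w) c ▸
      (hY w (hball w (Metric.sphere_subset_closedBall hw))).1).le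
  rw [deriv_sub_const, div_one] at hcauchy
  rw [dist_zero_right]
  exact hcauchy.trans_lt (half_lt_self hε)

lemma tendsto_exp_mul_deriv (hy : DifferentiableOn ℂ y UHP)
    (hlim : Tendsto (fun z => cexp (s * z) * y z) atImInfty (𝓝 c)) :
    Tendsto (fun z => cexp (s * z) * deriv y z) atImInfty (𝓝 (-s * c)) := by
  have hder : ∀ z ∈ UHP, deriv (fun z => cexp (s * z) * y z) z - s * (cexp (s * z) * y z) =
      cexp (s * z) * deriv y z := fun z hz => by
    have hexp : HasDerivAt (fun w => cexp (s * w)) (cexp (s * z) * (s * 1)) z :=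
      ((hasDerivAt_id z).const_mul s).cexp
    rw [(hexp.fun_mul (differentiableAt_of_mem_UHP hy hz).hasDerivAt).deriv]
    ring
  have hsub := (tendsto_deriv_zero ((by fun_prop : DifferentiableOn ℂ (fun z => cexp (s * z))
    UHP).fun_mul hy) hlim).sub (hlim.const_mul s)
  rw [zero_sub, ← neg_mul] at hsub
  exact hsub.congr' (eventually_mem_UHP.mono hder)

lemma tendsto_deriv_deriv_div (hy : DifferentiableOn ℂ y UHP) (hc : c ≠ 0)
    (hlim : Tendsto (fun z => cexp (s * z) * y z) atImInfty (𝓝 c)) :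
    Tendsto (fun z => deriv (deriv y) z / y z) atImInfty (𝓝 (s ^ 2)) := by
  have hquot := (tendsto_exp_mul_deriv (differentiableOn_deriv_UHP hy)
    (tendsto_exp_mul_deriv hy hlim)).div hlim hc
  rw [show -s * (-s * c) / c = s ^ 2 by field_simp] at hquot
  exact hquot.congr fun z => mul_div_mul_left _ _ (exp_ne_zero _)

end Derivatives

/-- The Wronskian of two functions, with the sign for which `(1, z)` has Wronskian `1`. -/
def wronskian (y₁ y₂ : ℂ → ℂ) (z : ℂ) : ℂ := y₁ z * deriv y₂ z - deriv y₁ z * y₂ z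

section Wronskian

variable {y y₁ y₂ g : ℂ → ℂ} {s c d : ℂ}

lemma differentiableOn_wronskian (h₁ : DifferentiableOn ℂ y₁ UHP)
    (h₂ : DifferentiableOn ℂ y₂ UHP) : DifferentiableOn ℂ (wronskian y₁ y₂) UHP :=
  (h₁.mul (differentiableOn_deriv_UHP h₂)).sub ((differentiableOn_deriv_UHP h₁).mul h₂)

lemma deriv_wronskian (h₁ : DifferentiableOn ℂ y₁ UHP) (h₂ : DifferentiableOn ℂ y₂ UHP) {z : ℂ}
    (hz : z ∈ UHP) :
    deriv (wronskian y₁ y₂) z = y₁ z * deriv (deriv y₂) z - deriv (deriv y₁) z * y₂ z := by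
  have hasDeriv {u : ℂ → ℂ} (hu : DifferentiableOn ℂ u UHP) : HasDerivAt u (deriv u z) z :=
    (differentiableAt_of_mem_UHP hu hz).hasDerivAt
  have hder := ((hasDeriv h₁).mul (hasDeriv (differentiableOn_deriv_UHP h₂))).sub
    ((hasDeriv (differentiableOn_deriv_UHP h₁)).mul (hasDeriv h₂))
  rw [show deriv (wronskian y₁ y₂) z = _ from hder.deriv]
  ring

lemma wronskian_id_mul_add (hy : DifferentiableOn ℂ y UHP) (hg : DifferentiableOn ℂ g UHP)
    (β : ℂ) {z : ℂ} (hz : z ∈ UHP) :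
    wronskian y (fun w => w * y w + β * g w) z = y z ^ 2 + β * wronskian y g z := by
  have hder := ((hasDerivAt_id z).mul (differentiableAt_of_mem_UHP hy hz).hasDerivAt).add
    ((differentiableAt_of_mem_UHP hg hz).hasDerivAt.const_mul β)
  rw [wronskian, wronskian, show deriv (fun w => w * y w + β * g w) z = _ from hder.deriv]
  simp only [id_eq]
  ring

lemma deriv_map_add_one_of_jordan {e : ℂ} (h₁ : DifferentiableOn ℂ y₁ UHP)
    (h₂ : DifferentiableOn ℂ y₂ UHP) (hT : ∀ z ∈ UHP, y₂ (z + 1) = e * (y₂ z + y₁ z))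
    {z : ℂ} (hz : z ∈ UHP) : deriv y₂ (z + 1) = e * (deriv y₂ z + deriv y₁ z) := by
  rw [deriv_map_add_one hT hz, deriv_const_mul_field,
    deriv_fun_add (differentiableAt_of_mem_UHP h₂ hz) (differentiableAt_of_mem_UHP h₁ hz)]

lemma wronskian_map_add_one {e : ℂ} (he : e ^ 2 = 1) (h₁ : DifferentiableOn ℂ y₁ UHP)
    (h₂ : DifferentiableOn ℂ y₂ UHP) (hT₁ : ∀ z ∈ UHP, y₁ (z + 1) = e * y₁ z)
    (hT₂ : ∀ z ∈ UHP, y₂ (z + 1) = e * (y₂ z + y₁ z)) {z : ℂ} (hz : z ∈ UHP) :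
    wronskian y₁ y₂ (z + 1) = wronskian y₁ y₂ z := by
  rw [wronskian, wronskian, hT₁ z hz, hT₂ z hz, deriv_map_add_one_of_const_mul hT₁ hz,
    deriv_map_add_one_of_jordan h₁ h₂ hT₂ hz]
  linear_combination (y₁ z * deriv y₂ z - deriv y₁ z * y₂ z) * he

lemma tendsto_wronskian (hy : DifferentiableOn ℂ y UHP) (hg : DifferentiableOn ℂ g UHP)
    (hylim : Tendsto (fun z => cexp (-s * z) * y z) atImInfty (𝓝 c))
    (hglim : Tendsto (fun z => cexp (s * z) * g z) atImInfty (𝓝 d)) :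
    Tendsto (wronskian y g) atImInfty (𝓝 (-(2 * s * c * d))) := by
  have hlim := (hylim.mul (tendsto_exp_mul_deriv hg hglim)).sub
    ((tendsto_exp_mul_deriv hy hylim).mul hglim)
  rw [show c * (-s * d) - - -s * c * d = -(2 * s * c * d) by ring] at hlim
  refine hlim.congr fun z => ?_
  have hexp : cexp (-s * z) * cexp (s * z) = 1 := by
    rw [← exp_add, neg_mul, neg_add_cancel, exp_zero]
  rw [wronskian]
  linear_combination (y z * deriv g z - deriv y z * g z) * hexp

lemma div_eq_div_of_wronskian_eq_zero {S : Set ℂ} (hSo : IsOpen S) (hSc : IsPreconnected S)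
    (h₁ : DifferentiableOn ℂ y₁ S) (h₂ : DifferentiableOn ℂ y₂ S) (hne : ∀ z ∈ S, y₁ z ≠ 0)
    (hW : ∀ z ∈ S, wronskian y₁ y₂ z = 0) {z w : ℂ} (hz : z ∈ S) (hw : w ∈ S) :
    y₂ z / y₁ z = y₂ w / y₁ w := by
  have hder : ∀ z ∈ S, HasDerivAt (fun z => y₂ z / y₁ z) 0 z := fun z hz => by
    have hquot := (h₂.differentiableAt (hSo.mem_nhds hz)).hasDerivAt.fun_div
      (h₁.differentiableAt (hSo.mem_nhds hz)).hasDerivAt (hne z hz)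
    refine hquot.congr_deriv ?_
    have hWz : y₁ z * deriv y₂ z - deriv y₁ z * y₂ z = 0 := hW z hz
    rw [show deriv y₂ z * y₁ z - y₂ z * deriv y₁ z = 0 by linear_combination hWz, zero_div]
  exact hSo.is_const_of_deriv_eq_zero hSc
    (fun z hz => (hder z hz).differentiableAt.differentiableWithinAt)
    (fun z hz => (hder z hz).deriv) hz hw

end Wronskian

/-- A vector-valued form `(y₁, y₂)` of weight `-1` on `ℍ` for the group generated by `z ↦ z + 1`
and the Fricke involution: the translation acts by a unipotent Jordan block and the involution
swaps the two components, both up to the sign `e`. -/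
structure IsFrickePair (N : ℝ) (e : ℂ) (y₁ y₂ : ℂ → ℂ) : Prop where
  sq_eq_one : e ^ 2 = 1
  differentiableOn₁ : DifferentiableOn ℂ y₁ UHP
  differentiableOn₂ : DifferentiableOn ℂ y₂ UHP
  map_add_one₁ : ∀ z ∈ UHP, y₁ (z + 1) = e * y₁ z
  map_add_one₂ : ∀ z ∈ UHP, y₂ (z + 1) = e * (y₂ z + y₁ z)
  map_fricke₁ : ∀ z ∈ UHP, y₁ (fricke N z) = e * y₂ z / z
  map_fricke₂ : ∀ z ∈ UHP, y₂ (fricke N z) = -e / N * y₁ z / z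

namespace IsFrickePair

variable {N : ℝ} {e : ℂ} {y₁ y₂ : ℂ → ℂ}

lemma isFrickeForm_wronskian (hN : 0 < N) (h : IsFrickePair N e y₁ y₂) :
    IsFrickeForm N 0 (wronskian y₁ y₂) where
  differentiableOn := differentiableOn_wronskian h.differentiableOn₁ h.differentiableOn₂
  map_add_one z hz := wronskian_map_add_one h.sq_eq_one h.differentiableOn₁ h.differentiableOn₂
    h.map_add_one₁ h.map_add_one₂ hz
  map_fricke z hz := by
    have hN₀ : (N : ℂ) ≠ 0 := ofReal_ne_zero.2 hN.ne'
    have hz₀ := ne_zero_of_mem_UHP hz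
    rw [wronskian, wronskian, h.map_fricke₁ z hz, h.map_fricke₂ z hz,
      deriv_map_fricke_of_weight_neg_one hN h.differentiableOn₁
        (h.differentiableOn₂.const_mul _) h.map_fricke₁ hz,
      deriv_map_fricke_of_weight_neg_one hN h.differentiableOn₂
        (h.differentiableOn₁.const_mul _) h.map_fricke₂ hz,
      deriv_const_mul_field, deriv_const_mul_field]
    field_simp
    linear_combination z * (y₁ z * deriv y₂ z - deriv y₁ z * y₂ z) * h.sq_eq_one

theorem exists_wronskian_eq (hN : 0 < N) (hN₄ : N < 4) (h : IsFrickePair N e y₁ y₂)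
    (hb : BoundedAtFilter atImInfty (wronskian y₁ y₂)) (hne : ∀ᶠ z in atImInfty, y₁ z ≠ 0) :
    ∃ a ≠ 0, ∀ z ∈ UHP, wronskian y₁ y₂ z = a := by
  obtain ⟨a, ha⟩ := (h.isFrickeForm_wronskian hN).eq_const_of_bounded hN hN₄ hb
  refine ⟨a, ?_, ha⟩
  rintro rfl
  obtain ⟨Y, hY⟩ := eventually_atImInfty_iff.1 (hne.and eventually_mem_UHP)
  set S : Set ℂ := {z | Y < z.im}
  have hS : ∀ z ∈ S, y₁ z ≠ 0 ∧ z ∈ UHP := fun z hz => hY z (le_of_lt hz)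
  obtain ⟨z, hz⟩ : ∃ z, z ∈ S := ⟨⟨0, Y + 1⟩, lt_add_one Y⟩
  have hz₁ : z + 1 ∈ S := by simpa [S] using hz
  have hquot := div_eq_div_of_wronskian_eq_zero (isOpen_lt continuous_const continuous_im)
    (convex_halfSpace_im_gt Y).isPreconnected (h.differentiableOn₁.mono fun z hz => (hS z hz).2)
    (h.differentiableOn₂.mono fun z hz => (hS z hz).2) (fun z hz => (hS z hz).1)
    (fun z hz => ha z (hS z hz).2) hz₁ hz
  obtain ⟨hy, hzU⟩ := hS z hz
  have he : e ≠ 0 := fun he => by simpa [he] using h.sq_eq_one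
  rw [h.map_add_one₁ z hzU, h.map_add_one₂ z hzU, mul_div_mul_left _ _ he, add_div,
    div_self hy] at hquot
  simp at hquot

section ConstantWronskian

variable {a : ℂ}

lemma mul_deriv_deriv_comm (h : IsFrickePair N e y₁ y₂)
    (hW : ∀ z ∈ UHP, wronskian y₁ y₂ z = a) {z : ℂ} (hz : z ∈ UHP) :
    y₁ z * deriv (deriv y₂) z = deriv (deriv y₁) z * y₂ z := by
  rw [← sub_eq_zero, ← deriv_wronskian h.differentiableOn₁ h.differentiableOn₂ hz,
    deriv_eq_of_eqOn_UHP hW hz, deriv_const]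

lemma isFrickeForm_wronskian_deriv (hN : 0 < N) (h : IsFrickePair N e y₁ y₂)
    (hW : ∀ z ∈ UHP, wronskian y₁ y₂ z = a) :
    IsFrickeForm N 2 (wronskian (deriv y₁) (deriv y₂)) where
  differentiableOn := differentiableOn_wronskian (differentiableOn_deriv_UHP h.differentiableOn₁)
    (differentiableOn_deriv_UHP h.differentiableOn₂)
  map_add_one z hz := wronskian_map_add_one h.sq_eq_one
    (differentiableOn_deriv_UHP h.differentiableOn₁)
    (differentiableOn_deriv_UHP h.differentiableOn₂)
    (fun _ hw => deriv_map_add_one_of_const_mul h.map_add_one₁ hw)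
    (fun _ hw => deriv_map_add_one_of_jordan h.differentiableOn₁ h.differentiableOn₂
      h.map_add_one₂ hw) hz
  map_fricke z hz := by
    have hN₀ : (N : ℂ) ≠ 0 := ofReal_ne_zero.2 hN.ne'
    have hF₁ := h.differentiableOn₂.const_mul e
    have hF₂ := h.differentiableOn₁.const_mul (-e / N)
    rw [wronskian, wronskian,
      deriv_map_fricke_of_weight_neg_one hN h.differentiableOn₁ hF₁ h.map_fricke₁ hz,
      deriv_map_fricke_of_weight_neg_one hN h.differentiableOn₂ hF₂ h.map_fricke₂ hz,
      deriv_deriv_map_fricke_of_weight_neg_one hN h.differentiableOn₁ hF₁ h.map_fricke₁ hz,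
      deriv_deriv_map_fricke_of_weight_neg_one hN h.differentiableOn₂ hF₂ h.map_fricke₂ hz]
    simp only [deriv_const_mul_field, deriv_const_mul_field']
    field_simp
    linear_combination
      z ^ 4 * (deriv y₁ z * deriv (deriv y₂) z - deriv (deriv y₁) z * deriv y₂ z) * h.sq_eq_one -
        z ^ 3 * e ^ 2 * h.mul_deriv_deriv_comm hW hz

lemma deriv_deriv_eq (h : IsFrickePair N e y₁ y₂) (ha : a ≠ 0)
    (hW : ∀ z ∈ UHP, wronskian y₁ y₂ z = a) {z : ℂ} (hz : z ∈ UHP) :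
    deriv (deriv y₁) z = -a⁻¹ * wronskian (deriv y₁) (deriv y₂) z * y₁ z := by
  have hWz : y₁ z * deriv y₂ z - deriv y₁ z * y₂ z = a := hW z hz
  rw [wronskian]
  field_simp
  linear_combination -deriv (deriv y₁) z * hWz + deriv y₁ z * h.mul_deriv_deriv_comm hW hz

end ConstantWronskian

theorem exists_potential (hN : 0 < N) (hN₄ : N < 4) (h : IsFrickePair N e y₁ y₂)
    (hb : BoundedAtFilter atImInfty (wronskian y₁ y₂)) (hne : ∀ᶠ z in atImInfty, y₁ z ≠ 0) :
    ∃ Q, IsFrickeForm N 2 Q ∧ ∀ z ∈ UHP, deriv (deriv y₁) z = Q z * y₁ z := by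
  obtain ⟨a, ha, hW⟩ := h.exists_wronskian_eq hN hN₄ hb hne
  exact ⟨_, (h.isFrickeForm_wronskian_deriv hN hW).const_mul (-a⁻¹), fun z hz =>
    h.deriv_deriv_eq ha hW hz⟩

lemma of_quasi {y g : ℂ → ℂ} {β : ℂ} (he : e ^ 2 = 1)
    (hy : DifferentiableOn ℂ y UHP) (hg : DifferentiableOn ℂ g UHP)
    (hyT : ∀ z ∈ UHP, y (z + 1) = e * y z) (hgT : ∀ z ∈ UHP, g (z + 1) = e * g z)
    (hyW : ∀ z ∈ UHP, y (fricke N z) = e * (y z + β * g z / z))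
    (hgW : ∀ z ∈ UHP, g (fricke N z) = e * g z / (N * z ^ 2)) :
    IsFrickePair N e y fun z => z * y z + β * g z where
  sq_eq_one := he
  differentiableOn₁ := hy
  differentiableOn₂ := (differentiableOn_id.mul hy).add (hg.const_mul β)
  map_add_one₁ := hyT
  map_add_one₂ z hz := by
    rw [hyT z hz, hgT z hz]
    ring
  map_fricke₁ z hz := by
    have hz₀ := ne_zero_of_mem_UHP hz
    rw [hyW z hz]
    field_simp
  map_fricke₂ z hz := by
    have hz₀ := ne_zero_of_mem_UHP hz
    rw [hyW z hz, hgW z hz, fricke]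
    field_simp
    ring

end IsFrickePair

section Eisenstein

lemma neg_one_div_mem_UHP {z : ℂ} (hz : z ∈ UHP) : -1 / z ∈ UHP := by
  simpa [fricke] using fricke_mem_UHP one_pos hz

lemma mk_neg_one_div {z : ℂ} (hz : z ∈ UHP) :
    UpperHalfPlane.mk (-1 / z) (neg_one_div_mem_UHP hz) =
      UpperHalfPlane.mk (-(UpperHalfPlane.mk z hz : ℂ))⁻¹
        (UpperHalfPlane.im_inv_neg_coe_pos ⟨z, hz⟩) := by
  ext
  simp [inv_neg, neg_div]

lemma E2_eq_eisensteinSeries {z : ℂ} (hz : z ∈ UHP) : E2 z = EisensteinSeries.E2 ⟨z, hz⟩ := by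
  rw [EisensteinSeries.E2_eq_tsum_cexp, tsum_pnat_eq_tsum_succ
    (f := fun n => (ArithmeticFunction.sigma 1 n : ℂ) * cexp (2 * Real.pi * I * z) ^ n)]
  rfl

lemma E4_eq_eisensteinSeries {z : ℂ} (hz : z ∈ UHP) : E4 z = ModularForm.E₄ ⟨z, hz⟩ := by
  have hb : bernoulli 4 = -1 / 30 := by
    rw [bernoulli_eq_bernoulli'_of_ne_one (by norm_num), bernoulli'_four]
  have hsum := tsum_pnat_eq_tsum_succ
    (f := fun n => (ArithmeticFunction.sigma 3 n : ℂ) * cexp (2 * Real.pi * I * z) ^ n)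
  rw [EisensteinSeries.q_expansion_bernoulli (by norm_num) (by decide), E4]
  simp only [qexp, ← hsum, hb]
  norm_num

lemma E2_neg_one_div {z : ℂ} (hz : z ∈ UHP) :
    E2 (-1 / z) = z ^ 2 * E2 z + 6 * z / (Real.pi * I) := by
  have hslash := congrFun (EisensteinSeries.E2_slash_action ModularGroup.S) ⟨z, hz⟩
  have hz₀ := ne_zero_of_mem_UHP hz
  have hpi : (Real.pi : ℂ) ≠ 0 := ofReal_ne_zero.2 Real.pi_ne_zero
  simp only [SlashInvariantForm.slash_S_apply, Pi.sub_apply, Pi.smul_apply, EisensteinSeries.D2_S,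
    smul_eq_mul, riemannZeta_two, ← mk_neg_one_div hz, ← E2_eq_eisensteinSeries] at hslash
  rw [_root_.zpow_neg, ← div_eq_mul_inv, div_eq_iff (zpow_ne_zero _ hz₀)] at hslash
  rw [hslash]
  field_simp
  linear_combination -6 * I_sq

lemma E4_neg_one_div {z : ℂ} (hz : z ∈ UHP) : E4 (-1 / z) = z ^ 4 * E4 z := by
  have hslash := (SlashInvariantForm.slash_S_apply ModularForm.E₄ 4 ⟨z, hz⟩).symm.trans
    (congrFun (ModularForm.E₄.slash_action_eq' _
      (MonoidHom.mem_range.mpr ⟨ModularGroup.S, rfl⟩)) ⟨z, hz⟩)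
  have hmul : E4 (-1 / z) * z ^ (-4 : ℤ) = E4 z := by
    rwa [E4_eq_eisensteinSeries (neg_one_div_mem_UHP hz), E4_eq_eisensteinSeries hz,
      mk_neg_one_div]
  have hz₀ := ne_zero_of_mem_UHP hz
  rw [← hmul, _root_.zpow_neg]
  field_simp

lemma two_mul_mem_UHP {z : ℂ} (hz : z ∈ UHP) : 2 * z ∈ UHP := by
  simpa using real_mul_mem_UHP hz two_pos

lemma E2_congr {z w : ℂ} (h : qexp z = qexp w) : E2 z = E2 w := by
  rw [E2, E2, h]

lemma E4_congr {z w : ℂ} (h : qexp z = qexp w) : E4 z = E4 w := by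
  rw [E4, E4, h]

lemma qexp_two_mul_add_one (z : ℂ) : qexp (2 * (z + 1)) = qexp (2 * z) := by
  rw [qexp_two_mul, qexp_two_mul, qexp_add_one]

lemma differentiableOn_E2 : DifferentiableOn ℂ E2 UHP :=
  (UpperHalfPlane.mdifferentiable_iff.1 E2_mdifferentiable).congr fun z hz => by
    simp [E2_eq_eisensteinSeries hz, UpperHalfPlane.ofComplex_apply_of_im_pos hz]

lemma differentiableOn_E4 : DifferentiableOn ℂ E4 UHP :=
  (UpperHalfPlane.mdifferentiable_iff.1 ModularForm.E₄.holo').congr fun z hz => by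
    simp [E4_eq_eisensteinSeries hz, UpperHalfPlane.ofComplex_apply_of_im_pos hz]

lemma differentiableOn_comp_two_mul {g : ℂ → ℂ} (hg : DifferentiableOn ℂ g UHP) :
    DifferentiableOn ℂ (fun z => g (2 * z)) UHP :=
  hg.fun_comp (by fun_prop) fun _ hz => two_mul_mem_UHP hz

lemma tendsto_two_mul_atImInfty : Tendsto (fun z : ℂ => 2 * z) atImInfty atImInfty := by
  rw [tendsto_comap_iff]
  exact (tendsto_comap.const_mul_atTop two_pos).congr fun z => by simp

lemma tendsto_E4 : Tendsto E4 atImInfty (𝓝 1) := by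
  have hsummable := ((summable_nat_add_iff 1).2
    (EisensteinSeries.summable_sigma_mul_cexp_pow (k := 4) (by norm_num) UpperHalfPlane.I)).norm
  have hsum : Tendsto
      (fun z => ∑' n : ℕ, (ArithmeticFunction.sigma 3 (n + 1) : ℂ) * qexp z ^ (n + 1)) atImInfty
      (𝓝 (∑' n : ℕ, (ArithmeticFunction.sigma 3 (n + 1) : ℂ) * 0 ^ (n + 1))) := by
    refine tendsto_tsum_of_dominated_convergence hsummable
      (fun n => (tendsto_qexp.pow (n + 1)).const_mul _) ?_
    filter_upwards [eventually_le_im 1] with z hz n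
    have hq : ‖qexp z‖ ≤ ‖cexp (2 * Real.pi * I * (UpperHalfPlane.I : ℂ))‖ :=
      norm_qexp_le_of_im_le (by simpa using hz)
    rw [norm_mul, norm_mul, norm_pow, norm_pow]
    gcongr
  have hE4 : Tendsto E4 atImInfty _ := (hsum.const_mul 240).const_add 1
  simpa using hE4

lemma fricke_two (z : ℂ) : fricke 2 z = -1 / (2 * z) := by
  rw [fricke, ofReal_ofNat]

lemma two_mul_fricke_two (z : ℂ) : 2 * fricke 2 z = -1 / z := by
  rw [fricke_two, mul_div_assoc', mul_div_mul_left _ _ two_ne_zero]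

lemma differentiableOn_M2star2 : DifferentiableOn ℂ M2star2 UHP :=
  (((differentiableOn_comp_two_mul differentiableOn_E2).const_mul 2).add
    differentiableOn_E2).div_const 3

lemma M2star2_add_one (z : ℂ) : M2star2 (z + 1) = M2star2 z := by
  rw [M2star2, M2star2, E2_congr (qexp_add_one z), E2_congr (qexp_two_mul_add_one z)]

lemma M2star2_fricke {z : ℂ} (hz : z ∈ UHP) :
    M2star2 (fricke 2 z) = 2 * z ^ 2 * (M2star2 z + 4 / (Real.pi * I) / z) := by
  have hz₀ := ne_zero_of_mem_UHP hz
  have hpi : (Real.pi : ℂ) ≠ 0 := ofReal_ne_zero.2 Real.pi_ne_zero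
  rw [M2star2, two_mul_fricke_two, fricke_two, E2_neg_one_div hz,
    E2_neg_one_div (two_mul_mem_UHP hz), M2star2]
  field_simp
  ring

lemma isFrickeForm_M4plus2 : IsFrickeForm 2 2 M4plus2 where
  differentiableOn := (((differentiableOn_comp_two_mul differentiableOn_E4).const_mul 4).add
    differentiableOn_E4).div_const 5
  map_add_one z _ := by
    rw [M4plus2, M4plus2, E4_congr (qexp_add_one z), E4_congr (qexp_two_mul_add_one z)]
  map_fricke z hz := by
    rw [M4plus2, two_mul_fricke_two, fricke_two, E4_neg_one_div hz,
      E4_neg_one_div (two_mul_mem_UHP hz), M4plus2, zpow_ofNat, ofReal_ofNat]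
    ring

lemma tendsto_M4plus2 : Tendsto M4plus2 atImInfty (𝓝 1) := by
  have hlim : Tendsto M4plus2 atImInfty (𝓝 ((4 * 1 + 1) / 5)) :=
    (((tendsto_E4.comp tendsto_two_mul_atImInfty).const_mul 4).add tendsto_E4).div_const 5
  rwa [show ((4 * 1 + 1) / 5 : ℂ) = 1 by norm_num] at hlim

end Eisenstein

section EtaQuotient

open ModularForm

/-- The Euler product `∏_{n ≥ 1} (1 - qⁿ)`, which tends to `1` at the cusp `q = 0`. -/
def eulerProduct (q : ℂ) : ℂ := ∏' n : ℕ, (1 - q ^ (n + 1))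

lemma tendsto_eulerProduct : Tendsto eulerProduct (𝓝 0) (𝓝 1) := by
  have hcont : Tendsto eulerProduct (𝓝 0) (𝓝 (eulerProduct 0)) :=
    (differentiableOn_tprod_one_sub_pow.differentiableAt
      (Metric.ball_mem_nhds (0 : ℂ) one_pos)).continuousAt
  simpa [eulerProduct] using hcont

lemma eta_eq_exp_mul_eulerProduct (z : ℂ) :
    η z = cexp (Real.pi * I * z / 12) * eulerProduct (qexp z) := by
  have hexp : 2 * Real.pi * I * z / (24 : ℝ) = Real.pi * I * z / 12 := by
    push_cast
    ring
  rw [ModularForm.eta, Function.Periodic.qParam, hexp, eulerProduct]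
  simp only [eta_q, Function.Periodic.qParam, ofReal_one, div_one, qexp]

lemma Pfun2_eq_exp_mul_eulerProduct (k : ℕ) {z : ℂ} (hz : z ∈ UHP) :
    Pfun2 k z = cexp (Real.pi * I * k * z) *
      (eulerProduct (qexp z) * eulerProduct (qexp (2 * z))) ^ (4 * k) := by
  have hmul₁ := multipliable_one_sub_pow (norm_qexp_lt_one hz)
  have hmul₂ := multipliable_one_sub_pow (norm_qexp_lt_one (two_mul_mem_UHP hz))
  rw [Pfun2, eulerProduct, eulerProduct, ← hmul₁.tprod_mul hmul₂, ← (hmul₁.mul hmul₂).tprod_pow]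
  congr 1
  exact tprod_congr fun n => by rw [mul_pow, qexp_two_mul, ← pow_mul]

lemma Pfun2_eq_eta_mul_eta_pow (k : ℕ) {z : ℂ} (hz : z ∈ UHP) :
    Pfun2 k z = (η z * η (2 * z)) ^ (4 * k) := by
  have hexp : cexp (Real.pi * I * k * z) =
      (cexp (Real.pi * I * z / 12) * cexp (Real.pi * I * (2 * z) / 12)) ^ (4 * k) := by
    rw [← exp_add, ← exp_nat_mul]
    congr 1
    push_cast
    ring
  rw [Pfun2_eq_exp_mul_eulerProduct k hz, hexp, ← mul_pow, eta_eq_exp_mul_eulerProduct,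
    eta_eq_exp_mul_eulerProduct, mul_mul_mul_comm]

lemma Pfun2_ne_zero (k : ℕ) {z : ℂ} (hz : z ∈ UHP) : Pfun2 k z ≠ 0 := by
  rw [Pfun2_eq_eta_mul_eta_pow k hz]
  exact pow_ne_zero _ (mul_ne_zero (eta_ne_zero hz) (eta_ne_zero (two_mul_mem_UHP hz)))

lemma differentiableOn_Pfun2 (k : ℕ) : DifferentiableOn ℂ (Pfun2 k) UHP := by
  have heta : DifferentiableOn ℂ η UHP := fun z hz =>
    (differentiableAt_eta_of_mem_upperHalfPlaneSet hz).differentiableWithinAt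
  exact ((heta.mul (differentiableOn_comp_two_mul heta)).pow _).congr fun z hz =>
    Pfun2_eq_eta_mul_eta_pow k hz

lemma csqrt_pow_four (w : ℂ) : Complex.sqrt w ^ 4 = w ^ 2 := by
  rw [show 4 = 2 * 2 from rfl, pow_mul, Complex.sqrt]
  simp

lemma eta_neg_one_div_pow_four {z : ℂ} (hz : z ∈ UHP) :
    η (-1 / z) ^ 4 = -(z ^ 2 * η z ^ 4) := by
  have heta : η (-1 / z) = (Complex.sqrt I)⁻¹ * (Complex.sqrt z * η z) := by
    simpa using eta_comp_eq_csqrt_I_inv hz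
  rw [heta, mul_pow, mul_pow, inv_pow, csqrt_pow_four, csqrt_pow_four, I_sq]
  norm_num

lemma Pfun2_fricke (k : ℕ) {z : ℂ} (hz : z ∈ UHP) :
    Pfun2 k (fricke 2 z) = (4 * z ^ 4) ^ k * Pfun2 k z := by
  rw [Pfun2_eq_eta_mul_eta_pow k hz, Pfun2_eq_eta_mul_eta_pow k (fricke_mem_UHP two_pos hz),
    pow_mul, pow_mul, ← mul_pow, two_mul_fricke_two, fricke_two, mul_pow,
    eta_neg_one_div_pow_four hz, eta_neg_one_div_pow_four (two_mul_mem_UHP hz)]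
  ring

lemma Pfun2_add_one (k : ℕ) (z : ℂ) : Pfun2 k (z + 1) = (-1) ^ k * Pfun2 k z := by
  have hexp : cexp (Real.pi * I * k * (z + 1)) = (-1) ^ k * cexp (Real.pi * I * k * z) := by
    rw [← exp_pi_mul_I, ← exp_nat_mul, ← exp_add]
    ring_nf
  rw [Pfun2, Pfun2, qexp_add_one, hexp, mul_assoc]

lemma tendsto_exp_mul_Pfun2 (k : ℕ) :
    Tendsto (fun z => cexp (-(Real.pi * I * k) * z) * Pfun2 k z) atImInfty (𝓝 1) := by
  have hlim := ((tendsto_eulerProduct.comp tendsto_qexp).mul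
    (tendsto_eulerProduct.comp (tendsto_qexp.comp tendsto_two_mul_atImInfty))).pow (4 * k)
  rw [mul_one, one_pow] at hlim
  refine hlim.congr' (eventually_mem_UHP.mono fun z hz => ?_)
  simp [Pfun2_eq_exp_mul_eulerProduct k hz, ← mul_assoc, ← exp_add]

lemma isFrickeForm_Pfun2_two : IsFrickeForm 2 (2 + 2) (Pfun2 2) where
  differentiableOn := differentiableOn_Pfun2 2
  map_add_one z _ := by rw [Pfun2_add_one, neg_one_sq, one_mul]
  map_fricke z hz := by
    rw [Pfun2_fricke 2 hz, show (2 + 2 : ℤ) = (4 : ℕ) from rfl, zpow_natCast, ofReal_ofNat]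
    ring

lemma qexp_isBigO_Pfun2_two : qexp =O[atImInfty] Pfun2 2 := by
  have hlim := (tendsto_exp_mul_Pfun2 2).inv₀ one_ne_zero
  refine Asymptotics.isBigO_of_div_tendsto_nhds
    (eventually_mem_UHP.mono fun z hz h₀ => absurd h₀ (Pfun2_ne_zero 2 hz)) 1⁻¹
    (hlim.congr fun z => ?_)
  rw [mul_inv, ← exp_neg, Pi.div_apply, div_eq_mul_inv, qexp]
  congr 2
  push_cast
  ring

theorem eq_mul_M4plus2_of_tendsto {Q : ℂ → ℂ} (hQ : IsFrickeForm 2 2 Q) {a : ℂ}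
    (hlim : Tendsto Q atImInfty (𝓝 a)) {z : ℂ} (hz : z ∈ UHP) : Q z = a * M4plus2 z := by
  have hdiff : Tendsto (fun z => Q z - a * M4plus2 z) atImInfty (𝓝 0) := by
    simpa using hlim.sub (tendsto_M4plus2.const_mul a)
  exact sub_eq_zero.1
    ((hQ.sub (isFrickeForm_M4plus2.const_mul a)).eq_zero_of_isBigO two_pos (by norm_num) hdiff
      isFrickeForm_Pfun2_two (fun _ => Pfun2_ne_zero 2) qexp_isBigO_Pfun2_two hz)

end EtaQuotient

section FrickeEigenforms

variable {f f₀ f₁ : ℂ → ℂ} {ε : ℂ} {n : ℤ} {k : ℕ}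

lemma toR_apply (γ : SL2Z) (i j : Fin 2) : (toR γ).1 i j = (γ.1 i j : ℝ) :=
  rfl

lemma toR_T_mem_Gamma0R (N : ℕ) : toR ModularGroup.T ∈ Gamma0R N :=
  Subgroup.mem_map_of_mem _ (by rw [CongruenceSubgroup.Gamma0_mem]; simp [ModularGroup.coe_T])

lemma IsModularForm.map_add_one {N : ℕ} (hf : IsModularForm (Gamma0R N) (fun _ => 1) n f) {z : ℂ}
    (hz : z ∈ UHP) : f (z + 1) = f z := by
  simpa [moeb, jfac, toR_apply, ModularGroup.coe_T] using hf.transform _ (toR_T_mem_Gamma0R N) z hz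

lemma IsModularForm.boundedAtFilter {Γ : Subgroup SL2R} {χ : SL2R → ℂ}
    (hf : IsModularForm Γ χ n f) : BoundedAtFilter atImInfty f := by
  obtain ⟨C, hC⟩ := hf.bdd_at_cusps 1
  refine Asymptotics.IsBigO.of_bound C ?_
  filter_upwards [eventually_mem_UHP, eventually_le_im 1] with z hz him
  simpa [moeb, jfac] using hC z hz him

lemma VOrder.exists_tendsto {N ν : ℝ} (h : VOrder N f ν) :
    ∃ c ≠ 0, Tendsto (fun z => cexp (-(2 * Real.pi * I * ν * z / N)) * f z) atImInfty (𝓝 c) := by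
  obtain ⟨c, hc, hlim⟩ := h
  refine ⟨c, hc, Metric.tendsto_nhds.2 fun ε hε => ?_⟩
  obtain ⟨Y, hY⟩ := hlim ε hε
  filter_upwards [eventually_le_im Y] with z hz
  exact dist_eq_norm _ c ▸ hY z hz

lemma map_fricke_of_mem_MFplus2 (hf : f ∈ MFplus2 ε (2 * n)) {z : ℂ} (hz : z ∈ UHP) :
    f (fricke 2 z) = ε * (2 * z ^ 2) ^ n * f z := by
  have hsq : ((√2 : ℝ) * z) ^ (2 : ℤ) = 2 * z ^ 2 := by
    rw [zpow_ofNat, mul_pow, ← ofReal_pow, Real.sq_sqrt zero_le_two, ofReal_ofNat]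
  have hne : (2 * z ^ 2) ^ n ≠ 0 :=
    zpow_ne_zero _ (mul_ne_zero two_ne_zero (pow_ne_zero 2 (ne_zero_of_mem_UHP hz)))
  have hlaw := hf.2 z hz
  rw [_root_.zpow_neg, _root_.zpow_mul, hsq, inv_mul_eq_iff_eq_mul₀ hne] at hlaw
  rw [fricke_two, hlaw]
  ring

lemma map_fricke_of_mem_MFplus2_four_mul (hf : f ∈ MFplus2 ε (4 * k)) {z : ℂ} (hz : z ∈ UHP) :
    f (fricke 2 z) = ε * (4 * z ^ 4) ^ k * f z := by
  rw [show (4 * k : ℤ) = 2 * ((2 * k : ℕ) : ℤ) by push_cast; ring] at hf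
  rw [map_fricke_of_mem_MFplus2 hf hz, zpow_natCast, pow_mul]
  ring

lemma map_fricke_of_mem_MFplus2_four_mul_sub_two (hf : f ∈ MFplus2 ε (4 * k - 2)) {z : ℂ}
    (hz : z ∈ UHP) : f (fricke 2 z) = ε * ((4 * z ^ 4) ^ k / (2 * z ^ 2)) * f z := by
  have hne : 2 * z ^ 2 ≠ 0 := mul_ne_zero two_ne_zero (pow_ne_zero 2 (ne_zero_of_mem_UHP hz))
  rw [show (4 * k - 2 : ℤ) = 2 * ((2 * k : ℕ) - 1 : ℤ) by push_cast; ring] at hf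
  rw [map_fricke_of_mem_MFplus2 hf hz, zpow_sub_one₀ hne, zpow_natCast, pow_mul]
  ring

lemma neg_one_pow_sq (k : ℕ) : ((-1 : ℂ) ^ k) ^ 2 = 1 := by
  rw [← pow_mul, pow_mul', neg_one_sq, one_pow]

lemma div_Pfun2_add_one (hT : ∀ z ∈ UHP, f (z + 1) = f z) {z : ℂ} (hz : z ∈ UHP) :
    f (z + 1) / Pfun2 k (z + 1) = (-1) ^ k * (f z / Pfun2 k z) := by
  have hinv : ((-1 : ℂ) ^ k)⁻¹ = (-1) ^ k :=
    inv_eq_of_mul_eq_one_left (by rw [← sq, neg_one_pow_sq])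
  rw [hT z hz, Pfun2_add_one, ← div_div, div_eq_mul_inv (f z), hinv, mul_comm (f z), mul_div_assoc]

lemma differentiableOn_div_Pfun2 (hf : DifferentiableOn ℂ f UHP) (k : ℕ) :
    DifferentiableOn ℂ (fun z => f z / Pfun2 k z) UHP :=
  hf.div (differentiableOn_Pfun2 k) fun _ => Pfun2_ne_zero k

lemma differentiableOn_quasi (hf₀ : DifferentiableOn ℂ f₀ UHP) (hf₁ : DifferentiableOn ℂ f₁ UHP)
    (hf : ∀ z, f z = f₀ z + M2star2 z * f₁ z) : DifferentiableOn ℂ f UHP :=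
  (hf₀.add (differentiableOn_M2star2.mul hf₁)).congr fun z _ => hf z

lemma isFrickePair_div_Pfun2 (hf₀ : f₀ ∈ MFplus2 ((-1) ^ k) (4 * k))
    (hf₁ : f₁ ∈ MFplus2 ((-1) ^ k) (4 * k - 2)) (hf : ∀ z, f z = f₀ z + M2star2 z * f₁ z) :
    IsFrickePair 2 ((-1) ^ k) (fun z => f z / Pfun2 k z)
      (fun z => z * (f z / Pfun2 k z) + 4 / (Real.pi * I) * (f₁ z / Pfun2 k z)) := by
  have hfactor : ∀ z ∈ UHP, ((4 : ℂ) * z ^ 4) ^ k ≠ 0 := fun z hz =>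
    pow_ne_zero _ (mul_ne_zero (by norm_num) (pow_ne_zero 4 (ne_zero_of_mem_UHP hz)))
  refine .of_quasi (neg_one_pow_sq k)
    (differentiableOn_div_Pfun2 (differentiableOn_quasi hf₀.1.holo hf₁.1.holo hf) k)
    (differentiableOn_div_Pfun2 hf₁.1.holo k)
    (fun z hz => div_Pfun2_add_one (fun w hw => ?_) hz)
    (fun z hz => div_Pfun2_add_one (fun w hw => hf₁.1.map_add_one hw) hz)
    (fun z hz => ?_) (fun z hz => ?_)
  · rw [hf, hf, M2star2_add_one, hf₀.1.map_add_one hw, hf₁.1.map_add_one hw]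
  · have hz₀ := ne_zero_of_mem_UHP hz
    rw [hf, hf, Pfun2_fricke k hz, M2star2_fricke hz, map_fricke_of_mem_MFplus2_four_mul hf₀ hz,
      map_fricke_of_mem_MFplus2_four_mul_sub_two hf₁ hz]
    field_simp [hfactor z hz]
    ring
  · rw [Pfun2_fricke k hz, map_fricke_of_mem_MFplus2_four_mul_sub_two hf₁ hz, ofReal_ofNat]
    field_simp [hfactor z hz]

lemma tendsto_exp_mul_div_Pfun2_of_vOrder (hext : VOrder 1 f k) :
    ∃ c ≠ 0, Tendsto (fun z => cexp (-(Real.pi * I * k) * z) * (f z / Pfun2 k z)) atImInfty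
      (𝓝 c) := by
  obtain ⟨c, hc, hlim⟩ := hext.exists_tendsto
  refine ⟨c, hc, ?_⟩
  have hquot := hlim.div (tendsto_exp_mul_Pfun2 k) one_ne_zero
  rw [div_one] at hquot
  refine hquot.congr fun z => ?_
  have hexp : cexp (-(2 * Real.pi * I * (k : ℝ) * z / (1 : ℝ))) =
      cexp (-(Real.pi * I * k) * z) * cexp (-(Real.pi * I * k) * z) := by
    rw [← exp_add]
    push_cast
    ring_nf
  rw [Pi.div_apply, hexp, mul_assoc, mul_div_mul_left _ _ (exp_ne_zero _), mul_div_assoc]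

lemma exists_tendsto_exp_mul_div_Pfun2 {N : ℕ} (hf : IsModularForm (Gamma0R N) (fun _ => 1) n f)
    (k : ℕ) :
    ∃ d, Tendsto (fun z => cexp (Real.pi * I * k * z) * (f z / Pfun2 k z)) atImInfty (𝓝 d) := by
  obtain ⟨d, hlim⟩ := exists_tendsto_of_bounded hf.holo (fun _ => hf.map_add_one) hf.boundedAtFilter
  refine ⟨d / 1, (hlim.div (tendsto_exp_mul_Pfun2 k) one_ne_zero).congr fun z => ?_⟩
  rw [Pi.div_apply, neg_mul, exp_neg, ← div_div, div_inv_eq_mul, mul_comm (f z), mul_div_assoc]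

lemma boundedAtFilter_exp (k : ℕ) :
    BoundedAtFilter atImInfty fun z => cexp (Real.pi * I * k * z) := by
  refine Asymptotics.IsBigO.of_bound 1 (eventually_mem_UHP.mono fun z hz => ?_)
  have him : 0 < z.im := hz
  have hre : (Real.pi * I * k * z).re ≤ 0 := by
    have : 0 ≤ Real.pi * k * z.im := by positivity
    simpa using this
  simpa [norm_exp] using hre

lemma boundedAtFilter_wronskian {y g : ℂ → ℂ} {c d : ℂ} (β : ℂ)
    (hy : DifferentiableOn ℂ y UHP) (hg : DifferentiableOn ℂ g UHP)
    (hylim : Tendsto (fun z => cexp (-(Real.pi * I * k) * z) * y z) atImInfty (𝓝 c))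
    (hglim : Tendsto (fun z => cexp (Real.pi * I * k * z) * g z) atImInfty (𝓝 d)) :
    BoundedAtFilter atImInfty (wronskian y fun z => z * y z + β * g z) := by
  have hybdd : BoundedAtFilter atImInfty y :=
    ((boundedAtFilter_exp k).mul (hylim.isBigO_one ℝ)).congr_left fun z => by
      simp [← mul_assoc, ← exp_add]
  have hWbdd : BoundedAtFilter atImInfty (wronskian y g) :=
    (tendsto_wronskian hy hg hylim hglim).isBigO_one ℝ
  refine ((hybdd.mul hybdd).add (hWbdd.const_mul_left β)).congr'
    (eventually_mem_UHP.mono fun z hz => ?_) EventuallyEq.rfl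
  simp only [Pi.add_apply, Pi.mul_apply, wronskian_id_mul_add hy hg β hz]
  ring

end FrickeEigenforms

/-- Theorem: an extremal quasimodular form of weight `4k` and depth 1
on `Γ₀⁺(2)` with sign `(-1)^k`, divided by `M₈^{k/2}`, solves
`y″ = -4π²(k/2)² M₄ y`. -/
theorem extremal_Gamma0plus2_weight4k_MODE
    (k : ℕ)
    (f₀ f₁ : ℂ → ℂ)
    (hf₀ : f₀ ∈ MFplus2 ((-1 : ℂ) ^ k) (4 * k))
    (hf₁ : f₁ ∈ MFplus2 ((-1 : ℂ) ^ k) (4 * k - 2))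
    (f : ℂ → ℂ) (hf : ∀ z, f z = f₀ z + M2star2 z * f₁ z)
    (hext : VOrder 1 f (k : ℝ)) :
    ∀ z ∈ UHP,
      deriv (deriv fun w => f w / Pfun2 k w) z
        = -(4 * (Real.pi : ℂ) ^ 2) * ((k : ℂ) / 2) ^ 2 * M4plus2 z * (f z / Pfun2 k z) := by
  have hpair := isFrickePair_div_Pfun2 hf₀ hf₁ hf
  obtain ⟨c, hc, hylim⟩ := tendsto_exp_mul_div_Pfun2_of_vOrder hext
  obtain ⟨d, hglim⟩ := exists_tendsto_exp_mul_div_Pfun2 hf₁.1 k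
  have hbdd := boundedAtFilter_wronskian (4 / (Real.pi * I)) hpair.differentiableOn₁
    (differentiableOn_div_Pfun2 hf₁.1.holo k) hylim hglim
  have hne : ∀ᶠ z in atImInfty, f z / Pfun2 k z ≠ 0 :=
    (hylim.eventually_ne hc).mono fun _ => right_ne_zero_of_mul
  obtain ⟨Q, hQ, hode⟩ := hpair.exists_potential two_pos (by norm_num) hbdd hne
  have hQlim : Tendsto Q atImInfty (𝓝 ((-(Real.pi * I * k)) ^ 2)) := by
    refine (tendsto_deriv_deriv_div hpair.differentiableOn₁ hc hylim).congr' ?_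
    filter_upwards [eventually_mem_UHP, hne] with z hz hy
    rw [hode z hz, mul_div_cancel_right₀ _ hy]
  intro z hz
  rw [hode z hz, eq_mul_M4plus2_of_tendsto hQ hQlim hz, neg_sq, mul_pow, mul_pow, I_sq]
  ring
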